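/- Assume the finite-state Euler–Maruyama setting with additive noise (σ(x,i) = σ(i)), the global Lipschitz condition with constant L, condition (H) with parameters c_0 and (β_i), and the averaging condition Σ_i μ_i β_i < 0. Fix p ∈ (0,1) with η_p > 0, a strictly positive eigenvector ξ^{(p)} of Q_p with eigenvalue −η_p, and the constants ξ̂_0, ξ̄_0, β_0, q_0, α as in Theorem 3.1. On a probability space carrying an i.i.d. sequence (Z_k)_{k≥0} of standard Gaussian vectors in ℝ^m and an independent discrete-time Markov chain (J_k)_{k≥0} on S with one-step transition matrix exp(δQ) and J_0 = i, define for each x ∈ ℝⁿ the synchronously coupled Euler–Maruyama sequences Ȳ^x_0 = x, Ȳ^x_{k+1} = Ȳ^x_k + δ·b(Ȳ^x_k, J_k) + √δ·σ(J_k) Z_k. Then for every δ ∈ (0,1) with δ < (1/(16L²)) ∧ (η_p/α)^{2/p}, every x, y ∈ ℝⁿ, i ∈ S, and every k ≥ 0: E|Ȳ^x_k − Ȳ^y_k|^p ≤ ξ̂_0 ξ̄_0 |x−y|^p e^{−(η_p − α δ^{p/2}) k δ}. -/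

import Mathlib

open MeasureTheory ProbabilityTheory

/-- `Q` has nonnegative off-diagonal entries and every row sums to zero
(a conservative Q-matrix). -/
def IsConservativeQMatrix {N : ℕ} (Q : Matrix (Fin N) (Fin N) ℝ) : Prop :=
  (∀ i j, i ≠ j → 0 ≤ Q i j) ∧ ∀ i, ∑ j, Q i j = 0

/-- Irreducibility: any two distinct states are connected by a finite chain of
transitions with strictly positive rates. -/
def MatrixIrreducible {N : ℕ} (Q : Matrix (Fin N) (Fin N) ℝ) : Prop :=
  ∀ i j : Fin N, i ≠ j → ∃ (k : ℕ) (c : ℕ → Fin N),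
    c 0 = i ∧ c k = j ∧ ∀ l < k, 0 < Q (c l) (c (l + 1))

/-- The set of real parts of the (complex) eigenvalues of a real matrix. -/
def spectrumRe {N : ℕ} (M : Matrix (Fin N) (Fin N) ℝ) : Set ℝ :=
  {x : ℝ | ∃ γ ∈ spectrum ℂ (M.map Complex.ofReal), γ.re = x}

/-- The matrix exponential `exp M = ∑ₖ Mᵏ/k!`. -/
noncomputable def matExp {N : ℕ} (M : Matrix (Fin N) (Fin N) ℝ) :
    Matrix (Fin N) (Fin N) ℝ :=
  ∑' k : ℕ, ((k.factorial : ℝ)⁻¹) • M ^ k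

/-- Standard Gaussian measure on `ℝ^m`. -/
noncomputable def stdGaussianPi (m : ℕ) : Measure (Fin m → ℝ) :=
  Measure.pi fun _ => gaussianReal 0 1

/-- The distribution on `Fin N` with weights given by row `i` of `P`. -/
noncomputable def rowMeasure {N : ℕ} (P : Matrix (Fin N) (Fin N) ℝ) (i : Fin N) :
    Measure (Fin N) :=
  ∑ j : Fin N, ENNReal.ofReal (P i j) • Measure.dirac j

/-- Hilbert–Schmidt norm of a real matrix. -/
noncomputable def hsNorm {n m : ℕ} (M : Matrix (Fin n) (Fin m) ℝ) : ℝ :=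
  Real.sqrt (∑ i, ∑ j, (M i j) ^ 2)

/-- One step of the Euler–Maruyama scheme as a transition kernel on `ℝⁿ × S`:
starting from `(x, i)`, the next state is
`(x + δ b(x,i) + √δ σ(x,i) Z, J)` with `Z` standard Gaussian on `ℝ^m` and
`J` distributed according to row `i` of `exp(δ Q)`, independently. -/
noncomputable def EMKernel {n m N : ℕ} (Q : Matrix (Fin N) (Fin N) ℝ)
    (b : EuclideanSpace ℝ (Fin n) → Fin N → EuclideanSpace ℝ (Fin n))
    (σ : EuclideanSpace ℝ (Fin n) → Fin N → Matrix (Fin n) (Fin m) ℝ)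
    (δ : ℝ) (q : EuclideanSpace ℝ (Fin n) × Fin N) :
    Measure (EuclideanSpace ℝ (Fin n) × Fin N) :=
  Measure.map
    (fun zj : (Fin m → ℝ) × Fin N =>
      (q.1 + δ • b q.1 q.2 +
        Real.sqrt δ • ((WithLp.equiv 2 (Fin n → ℝ)).symm ((σ q.1 q.2).mulVec zj.1)),
        zj.2))
    ((stdGaussianPi m).prod (rowMeasure (matExp (δ • Q)) q.2))

/-- `π` is an invariant measure of the kernel `K`. -/
def IsInvariantMeasure {α : Type*} [MeasurableSpace α] (K : α → Measure α)
    (π : Measure α) : Prop :=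
  ∀ A : Set α, MeasurableSet A → ∫⁻ q, K q A ∂π = π A


section Helpers

attribute [local instance] Matrix.linftyOpNormedRing Matrix.linftyOpNormedAlgebra

lemma matExp_eq_exp {N : ℕ} (M : Matrix (Fin N) (Fin N) ℝ) :
    matExp M = NormedSpace.exp M := by
  unfold matExp
  rw [NormedSpace.exp_eq_tsum ℝ]

lemma matExp_hasSum {N : ℕ} (M : Matrix (Fin N) (Fin N) ℝ) (i j : Fin N) :
    HasSum (fun k : ℕ => ((k.factorial : ℝ)⁻¹) * (M ^ k) i j) (matExp M i j) := by
  have h : HasSum (fun k : ℕ => ((k.factorial : ℝ)⁻¹) • M ^ k) (NormedSpace.exp M) :=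
    NormedSpace.exp_series_hasSum_exp' (𝕂 := ℝ) M
  rw [← matExp_eq_exp] at h
  have h1 := Pi.hasSum.1 h i
  have h2 := Pi.hasSum.1 h1 j
  exact h2

lemma matExp_entry_deriv {N : ℕ} (M : Matrix (Fin N) (Fin N) ℝ) (i j : Fin N) (t : ℝ) :
    HasDerivAt (fun s : ℝ => matExp (s • M) i j) ((matExp (t • M) * M) i j) t := by
  have h := hasDerivAt_exp_smul_const (𝕂 := ℝ) M t
  let l : Matrix (Fin N) (Fin N) ℝ →ₗ[ℝ] ℝ := Matrix.entryLinearMap ℝ ℝ i j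
  have := (LinearMap.toContinuousLinearMap l).hasFDerivAt.comp_hasDerivAt t h
  have e : (fun s : ℝ => matExp (s • M) i j) = fun s : ℝ => l (NormedSpace.exp (s • M)) := by
    funext s
    rw [matExp_eq_exp]
    rfl
  rw [e, matExp_eq_exp]
  exact this

lemma matExp_shift {N : ℕ} (M : Matrix (Fin N) (Fin N) ℝ) (c : ℝ) :
    matExp (M + c • (1 : Matrix (Fin N) (Fin N) ℝ)) = Real.exp c • matExp M := by
  rw [matExp_eq_exp, matExp_eq_exp]
  rw [Matrix.exp_add_of_commute _ _ ((Commute.one_right M).smul_right c)]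
  have h : c • (1 : Matrix (Fin N) (Fin N) ℝ) = algebraMap ℝ _ c := by
    rw [Algebra.algebraMap_eq_smul_one]
  have h2 : NormedSpace.exp (algebraMap ℝ (Matrix (Fin N) (Fin N) ℝ) c) =
      algebraMap ℝ (Matrix (Fin N) (Fin N) ℝ) (NormedSpace.exp c) :=
    (NormedSpace.algebraMap_exp_comm (𝔸 := Matrix (Fin N) (Fin N) ℝ) c).symm
  rw [h, h2, Algebra.algebraMap_eq_smul_one, ← Real.exp_eq_exp_ℝ]
  simp

end Helpers

lemma matExp_mulVec_deriv {N : ℕ} (M : Matrix (Fin N) (Fin N) ℝ) (v : Fin N → ℝ)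
    (j : Fin N) (t : ℝ) :
    HasDerivAt (fun s : ℝ => (matExp (s • M)).mulVec v j)
      ((matExp (t • M)).mulVec (M.mulVec v) j) t := by
  rw [Matrix.mulVec_mulVec]
  simp only [Matrix.mulVec, dotProduct]
  exact HasDerivAt.fun_sum fun k _ => (matExp_entry_deriv M j k t).mul_const (v k)

lemma matExp_zero' {N : ℕ} : matExp (0 : Matrix (Fin N) (Fin N) ℝ) = 1 := by
  rw [matExp_eq_exp, NormedSpace.exp_zero]

lemma matExp_nonneg_of_nonneg {N : ℕ} (M : Matrix (Fin N) (Fin N) ℝ)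
    (h : ∀ i j, 0 ≤ M i j) (i j : Fin N) :
    (1 : Matrix (Fin N) (Fin N) ℝ) i j ≤ matExp M i j := by
  have hp : ∀ k : ℕ, ∀ i j, 0 ≤ (M ^ k) i j := by
    intro k
    induction k with
    | zero =>
      intro i j
      rw [pow_zero, Matrix.one_apply]
      split_ifs <;> norm_num
    | succ k ih =>
      intro i j
      rw [pow_succ, Matrix.mul_apply]
      exact Finset.sum_nonneg fun l _ => mul_nonneg (ih i l) (h l j)
  have hs := matExp_hasSum M i j
  have := le_hasSum hs 0 (fun k _ => mul_nonneg (by positivity) (hp k i j))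
  simpa using this

lemma matExp_Q_lower {N : ℕ} (Q : Matrix (Fin N) (Fin N) ℝ) (hQ : IsConservativeQMatrix Q)
    (q₀ : ℝ) (hq : ∀ i, -Q i i ≤ q₀) (s : ℝ) (hs : 0 ≤ s) (i j : Fin N) :
    Real.exp (-(s * q₀)) * (1 : Matrix (Fin N) (Fin N) ℝ) i j ≤ matExp (s • Q) i j := by
  have h1 : s • Q = s • (Q + q₀ • (1 : Matrix (Fin N) (Fin N) ℝ)) +
      (-(s * q₀)) • (1 : Matrix (Fin N) (Fin N) ℝ) := by
    rw [smul_add, smul_smul, neg_smul]; abel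
  rw [h1, matExp_shift, Matrix.smul_apply, smul_eq_mul]
  refine mul_le_mul_of_nonneg_left (matExp_nonneg_of_nonneg _ ?_ i j) (Real.exp_pos _).le
  intro a c
  simp only [Matrix.smul_apply, Matrix.add_apply, smul_eq_mul]
  refine mul_nonneg hs ?_
  by_cases hac : a = c
  · subst hac; have := hq a; simp; linarith
  · rw [Matrix.one_apply_ne hac]; have := hQ.1 a c hac; simpa using this

lemma matExp_Q_nonneg {N : ℕ} (Q : Matrix (Fin N) (Fin N) ℝ) (hQ : IsConservativeQMatrix Q)
    (q₀ : ℝ) (hq : ∀ i, -Q i i ≤ q₀) (s : ℝ) (hs : 0 ≤ s) (i j : Fin N) :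
    0 ≤ matExp (s • Q) i j := by
  refine le_trans (mul_nonneg (Real.exp_pos _).le ?_) (matExp_Q_lower Q hQ q₀ hq s hs i j)
  rw [Matrix.one_apply]
  split_ifs <;> norm_num

lemma matExp_Q_rowsum {N : ℕ} (Q : Matrix (Fin N) (Fin N) ℝ) (hQ : IsConservativeQMatrix Q)
    (s : ℝ) (i : Fin N) : ∑ j, matExp (s • Q) i j = 1 := by
  have hd : ∀ t, HasDerivAt (fun s : ℝ => (matExp (s • Q)).mulVec (fun _ => 1) i) 0 t := by
    intro t
    have h := matExp_mulVec_deriv Q (fun _ => 1) i t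
    have h0 : Q.mulVec (fun _ => 1) = 0 := by
      ext a
      simp only [Matrix.mulVec, dotProduct, mul_one, Pi.zero_apply]
      exact hQ.2 a
    rw [h0, Matrix.mulVec_zero] at h
    exact h
  have h := is_const_of_deriv_eq_zero (fun t => (hd t).differentiableAt)
    (fun t => (hd t).deriv) s 0
  simp only [zero_smul, matExp_zero', Matrix.one_mulVec] at h
  simpa [Matrix.mulVec, dotProduct] using h

/-- one-step estimate for the matrix exponential applied to the eigenvector -/
lemma one_step {N : ℕ} (Q : Matrix (Fin N) (Fin N) ℝ) (hQ : IsConservativeQMatrix Q)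
    (q₀ : ℝ) (hq : ∀ i, -Q i i ≤ q₀) (a : Fin N → ℝ) (a₀ : ℝ) (ha : ∀ i, |a i| ≤ a₀)
    (η : ℝ) (ξ : Fin N → ℝ) (hξpos : ∀ i, 0 < ξ i)
    (heig : ∀ j, Q.mulVec ξ j = -η * ξ j - a j * ξ j)
    (ξhat ξmin : ℝ) (hmin0 : 0 < ξmin) (hhat : ∀ i, ξ i ≤ ξhat) (hmin : ∀ i, ξmin ≤ ξ i)
    (hq0 : 0 ≤ q₀) (δ : ℝ) (hδ : 0 ≤ δ) (j : Fin N) :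
    (matExp (δ • Q)).mulVec ξ j ≤
      ξ j * Real.exp (-(η + a j) * δ + 2 * a₀ * q₀ * ξhat / ξmin * δ ^ 2 / 2) := by
  set C := 2 * a₀ * q₀ * ξhat / ξmin with hC
  have ha0 : 0 ≤ a₀ := (abs_nonneg _).trans (ha j)
  have hhat0 : 0 ≤ ξhat := (hξpos j).le.trans (hhat j)
  set u : ℝ → ℝ := fun s => (matExp (s • Q)).mulVec ξ j with hu
  have hud : ∀ t, HasDerivAt u ((matExp (t • Q)).mulVec (Q.mulVec ξ) j) t :=
    fun t => matExp_mulVec_deriv Q ξ j t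
  have hlow : ∀ t, 0 ≤ t → ξmin ≤ u t := by
    intro t ht
    calc ξmin = ∑ k, matExp (t • Q) j k * ξmin := by
          rw [← Finset.sum_mul, matExp_Q_rowsum Q hQ, one_mul]
      _ ≤ _ := Finset.sum_le_sum fun k _ =>
          mul_le_mul_of_nonneg_left (hmin k) (matExp_Q_nonneg Q hQ q₀ hq t ht j k)
  have hkey : ∀ t, 0 ≤ t →
      (matExp (t • Q)).mulVec (Q.mulVec ξ) j ≤ (-(η + a j) + C * t) * u t := by
    intro t ht
    have hnn := fun k => matExp_Q_nonneg Q hQ q₀ hq t ht j k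
    have hrow := matExp_Q_rowsum Q hQ t j
    have hdiag : 1 - t * q₀ ≤ matExp (t • Q) j j := by
      have h1 := matExp_Q_lower Q hQ q₀ hq t ht j j
      rw [Matrix.one_apply_eq, mul_one] at h1
      have h2 := Real.add_one_le_exp (-(t * q₀))
      linarith
    have hE : (matExp (t • Q)).mulVec (Q.mulVec ξ) j =
        -(η + a j) * u t + ∑ k, matExp (t • Q) j k * ((a j - a k) * ξ k) := by
      simp only [hu, Matrix.mulVec, dotProduct] at heig ⊢
      rw [Finset.mul_sum, ← Finset.sum_add_distrib]
      refine Finset.sum_congr rfl fun k _ => ?_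
      rw [heig k]; ring
    have hS : ∑ k, matExp (t • Q) j k * ((a j - a k) * ξ k) ≤ 2 * a₀ * ξhat * (t * q₀) := by
      calc ∑ k, matExp (t • Q) j k * ((a j - a k) * ξ k)
          ≤ ∑ k, (matExp (t • Q) j k * (2 * a₀ * ξhat) -
              if k = j then matExp (t • Q) j j * (2 * a₀ * ξhat) else 0) := by
            refine Finset.sum_le_sum fun k _ => ?_
            split_ifs with h
            · subst h; simp
            · rw [sub_zero]
              refine mul_le_mul_of_nonneg_left ?_ (hnn k)
              have h1 := abs_le.1 (ha j)
              have h2 := abs_le.1 (ha k)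
              exact mul_le_mul (by linarith [h1.2, h2.1]) (hhat k) (hξpos k).le (by linarith)
        _ = (1 - matExp (t • Q) j j) * (2 * a₀ * ξhat) := by
            rw [Finset.sum_sub_distrib, ← Finset.sum_mul, hrow]
            simp; ring
        _ ≤ (t * q₀) * (2 * a₀ * ξhat) :=
            mul_le_mul_of_nonneg_right (by linarith) (by positivity)
        _ = _ := by ring
    have hfin : 2 * a₀ * ξhat * (t * q₀) ≤ C * t * u t := by
      have : 2 * a₀ * ξhat * (t * q₀) = C * t * ξmin := by
        rw [hC]; field_simp
      rw [this]
      exact mul_le_mul_of_nonneg_left (hlow t ht) (by positivity)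
    rw [hE]; linarith
  set f : ℝ → ℝ := fun s => u s * Real.exp ((η + a j) * s - C * s ^ 2 / 2) with hf
  have hfd : ∀ t, HasDerivAt f ((matExp (t • Q)).mulVec (Q.mulVec ξ) j *
      Real.exp ((η + a j) * t - C * t ^ 2 / 2) +
      u t * (Real.exp ((η + a j) * t - C * t ^ 2 / 2) * ((η + a j) - C * t))) t := by
    intro t
    refine (hud t).mul (HasDerivAt.exp ?_)
    have h1 := ((hasDerivAt_id t).const_mul (η + a j)).sub
      ((((hasDerivAt_id t).pow 2).const_mul C).div_const 2)
    refine h1.congr_deriv ?_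
    simp; ring
  have hanti : AntitoneOn f (Set.Ici 0) := by
    refine antitoneOn_of_deriv_nonpos (convex_Ici 0)
      (fun t _ => (hfd t).continuousAt.continuousWithinAt)
      (fun t _ => (hfd t).differentiableAt.differentiableWithinAt) ?_
    intro t ht
    rw [interior_Ici] at ht
    rw [(hfd t).deriv]
    have h := hkey t (le_of_lt ht)
    have he := Real.exp_pos ((η + a j) * t - C * t ^ 2 / 2)
    nlinarith
  have h0 := hanti (Set.mem_Ici.2 le_rfl) (Set.mem_Ici.2 hδ) hδ
  have hu0 : u 0 = ξ j := by
    simp only [hu, zero_smul, matExp_zero', Matrix.one_mulVec]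
  have hf0 : f 0 = ξ j := by simp [hf, hu0]
  rw [hf0] at h0
  have hEE : -(η + a j) * δ + C * δ ^ 2 / 2 = -((η + a j) * δ - C * δ ^ 2 / 2) := by ring
  rw [hEE, Real.exp_neg, ← div_eq_mul_inv, le_div_iff₀ (Real.exp_pos _)]
  exact h0

/-- path expansion and iteration of a one-step bound -/
lemma path_sum_le {N : ℕ} (M : Matrix (Fin N) (Fin N) ℝ) (hM : ∀ i j, 0 ≤ M i j)
    (g ξ : Fin N → ℝ) (hg : ∀ j, 0 ≤ g j) (r : ℝ)
    (hr0 : 0 ≤ r)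
    (hstep : ∀ j, g j * M.mulVec ξ j ≤ r * ξ j) (i : Fin N) (k : ℕ) :
    ∑ c : Fin (k + 1) → Fin N, ((if c 0 = i then (1 : ℝ) else 0) *
      ∏ l : Fin k, M (c l.castSucc) (c l.succ)) *
        ((∏ l : Fin k, g (c l.castSucc)) * ξ (c (Fin.last k))) ≤ r ^ k * ξ i := by
  induction k with
  | zero =>
    rw [← (Equiv.funUnique (Fin 1) (Fin N)).symm.sum_comp]
    simp
  | succ k ih =>
    rw [← (Fin.snocEquiv (fun _ : Fin (k + 2) => Fin N)).sum_comp, Fintype.sum_prod_type_right]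
    calc _ ≤ ∑ c : Fin (k + 1) → Fin N, r * (((if c 0 = i then (1 : ℝ) else 0) *
      ∏ l : Fin k, M (c l.castSucc) (c l.succ)) *
        ((∏ l : Fin k, g (c l.castSucc)) * ξ (c (Fin.last k)))) := ?_
      _ ≤ r * (r ^ k * ξ i) := by
        rw [← Finset.mul_sum]; exact mul_le_mul_of_nonneg_left ih hr0
      _ = _ := by ring
    refine Finset.sum_le_sum fun c _ => ?_
    set A := ((if c 0 = i then (1 : ℝ) else 0) *
      ∏ l : Fin k, M (c l.castSucc) (c l.succ)) * ∏ l : Fin k, g (c l.castSucc) with hA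
    have hA0 : 0 ≤ A := by
      refine mul_nonneg (mul_nonneg ?_ (Finset.prod_nonneg fun l _ => hM _ _))
        (Finset.prod_nonneg fun l _ => hg _)
      split_ifs <;> norm_num
    have hterm : ∀ x : Fin N,
      ((if (Fin.snocEquiv (fun _ : Fin (k + 2) => Fin N)) (x, c) 0 = i then (1 : ℝ) else 0) *
        ∏ l : Fin (k + 1), M ((Fin.snocEquiv (fun _ : Fin (k + 2) => Fin N)) (x, c) l.castSucc)
          ((Fin.snocEquiv (fun _ : Fin (k + 2) => Fin N)) (x, c) l.succ)) *
        ((∏ l : Fin (k + 1), g ((Fin.snocEquiv (fun _ : Fin (k + 2) => Fin N)) (x, c) l.castSucc))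
          * ξ ((Fin.snocEquiv (fun _ : Fin (k + 2) => Fin N)) (x, c) (Fin.last (k + 1)))) =
        A * (g (c (Fin.last k)) * (M (c (Fin.last k)) x * ξ x)) := by
      intro x
      have e1 : ∀ l : Fin (k + 1),
          (Fin.snocEquiv (fun _ : Fin (k + 2) => Fin N)) (x, c) l.castSucc = c l := by
        intro l; simp [Fin.snocEquiv]
      have e2 : (Fin.snocEquiv (fun _ : Fin (k + 2) => Fin N)) (x, c) (Fin.last (k + 1)) = x := by
        simp [Fin.snocEquiv]
      have e0 := e1 0
      rw [Fin.castSucc_zero] at e0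
      rw [e0, e2]
      simp_rw [e1]
      rw [Fin.prod_univ_castSucc, Fin.prod_univ_castSucc (fun l => g (c l)), Fin.succ_last, e2]
      simp_rw [Fin.succ_castSucc, e1]
      rw [hA]; ring
    rw [Finset.sum_congr rfl fun x _ => hterm x, ← Finset.mul_sum, ← Finset.mul_sum]
    have := mul_le_mul_of_nonneg_left (hstep (c (Fin.last k))) hA0
    simp only [Matrix.mulVec, dotProduct] at this
    refine this.trans (le_of_eq ?_)
    rw [hA]; ring

lemma chain_expect {N : ℕ} (M : Matrix (Fin N) (Fin N) ℝ) (hM : ∀ i j, 0 ≤ M i j)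
    {Ω : Type*} [MeasurableSpace Ω] (P : Measure Ω) [IsProbabilityMeasure P]
    (i : Fin N) (J : ℕ → Ω → Fin N) (hJmeas : ∀ k, Measurable (J k))
    (hJchain : ∀ (k : ℕ) (j : ℕ → Fin N),
      P {ω | ∀ l ≤ k, J l ω = j l} =
        ENNReal.ofReal ((if j 0 = i then (1 : ℝ) else 0) *
          ∏ l ∈ Finset.range k, M (j l) (j (l + 1))))
    (k : ℕ) (F : (Fin (k + 1) → Fin N) → ℝ) :
    Integrable (fun ω => F (fun l => J l ω)) P ∧
    ∫ ω, F (fun l => J l ω) ∂P = ∑ c : Fin (k + 1) → Fin N, ((if c 0 = i then (1 : ℝ) else 0) *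
      ∏ l : Fin k, M (c l.castSucc) (c l.succ)) * F c := by
  set X : Ω → (Fin (k + 1) → Fin N) := fun ω l => J l ω with hX
  have hXm : Measurable X := measurable_pi_lambda _ fun l => hJmeas l
  haveI : IsProbabilityMeasure (Measure.map X P) := Measure.isProbabilityMeasure_map hXm.aemeasurable
  have hFi : Integrable F (Measure.map X P) := Integrable.of_finite
  refine ⟨hFi.comp_measurable hXm, ?_⟩
  have h1 : ∫ ω, F (X ω) ∂P = ∫ c, F c ∂(Measure.map X P) :=
    (integral_map hXm.aemeasurable hFi.aestronglyMeasurable).symm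
  rw [h1, integral_fintype hFi]
  refine Finset.sum_congr rfl fun c _ => ?_
  rw [smul_eq_mul]
  congr 1
  rw [measureReal_def, Measure.map_apply hXm (measurableSet_singleton c)]
  have hset : X ⁻¹' {c} = {ω | ∀ l ≤ k, J l ω = (fun l => c (Fin.ofNat (k + 1) l)) l} := by
    ext ω
    simp only [Set.mem_preimage, Set.mem_singleton_iff, Set.mem_setOf_eq, hX, funext_iff]
    constructor
    · intro h l hl
      rw [← h (Fin.ofNat (k + 1) l)]
      simp [Fin.ofNat, Nat.mod_eq_of_lt (Nat.lt_succ_of_le hl)]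
    · intro h l
      rw [h l (Nat.le_of_lt_succ l.2)]
      simp
  rw [hset, hJchain, ENNReal.toReal_ofReal]
  · rw [Finset.prod_range]
    congr 1
    refine Finset.prod_congr rfl fun l _ => ?_
    congr 2
    · ext; simp [Fin.ofNat]
    · ext; simp [Fin.ofNat]
  · refine mul_nonneg ?_ (Finset.prod_nonneg fun l _ => hM _ _)
    split_ifs <;> norm_num

theorem stmt7 {n m N : ℕ} (hN : 2 ≤ N)
    (Q : Matrix (Fin N) (Fin N) ℝ)
    (hQ : IsConservativeQMatrix Q) (hirr : MatrixIrreducible Q)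
    (μ : Fin N → ℝ) (hμpos : ∀ i, 0 < μ i) (hμsum : ∑ i, μ i = 1)
    (hμstat : ∀ j, ∑ i, μ i * Q i j = 0)
    (b : EuclideanSpace ℝ (Fin n) → Fin N → EuclideanSpace ℝ (Fin n))
    (σ : EuclideanSpace ℝ (Fin n) → Fin N → Matrix (Fin n) (Fin m) ℝ)
    -- additive noise : `σ` does not depend on the space variable
    (hadd : ∀ x y i, σ x i = σ y i)
    -- global Lipschitz condition
    (L : ℝ) (hL : 0 ≤ L)
    (hLip : ∀ i x y, ‖b x i - b y i‖ + hsNorm (σ x i - σ y i) ≤ L * ‖x - y‖)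
    -- condition (H)
    (c₀ : ℝ) (hc₀ : 0 < c₀) (β : Fin N → ℝ)
    (hH1 : ∀ i x, 2 * (inner ℝ x (b x i) : ℝ) + hsNorm (σ x i) ^ 2 ≤ c₀ + β i * ‖x‖ ^ 2)
    (hH2 : ∀ i x y, 2 * (inner ℝ (x - y) (b x i - b y i) : ℝ)
        + hsNorm (σ x i - σ y i) ^ 2 ≤ β i * ‖x - y‖ ^ 2)
    -- averaging condition
    (havg : ∑ i, μ i * β i < 0)
    -- `p`, `η_p` and the Perron–Frobenius eigenvector `ξ`
    (p : ℝ) (hp : 0 < p) (hp1 : p < 1) (ηp : ℝ)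
    (hη : IsGreatest (spectrumRe (Q + (p / 2) • Matrix.diagonal β)) (-ηp))
    (hηpos : 0 < ηp)
    (ξ : Fin N → ℝ) (hξpos : ∀ i, 0 < ξ i)
    (hξeig : (Q + (p / 2) • Matrix.diagonal β).mulVec ξ = (-ηp) • ξ)
    -- the constants of Theorem 3.1
    (ξhat ξbar β₀ q₀ α : ℝ)
    (hξhat : IsGreatest (Set.range ξ) ξhat)
    (hξbar : IsLeast (Set.range ξ) ξbar⁻¹)
    (hβ₀ : IsGreatest (Set.range fun i => |β i|) β₀)
    (hq₀ : IsGreatest (Set.range fun i => -Q i i) q₀)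
    (hα : α = p * (β₀ + 4 * L ^ 2 * (3 + 4 * β₀)
        + (4 : ℝ) ^ ((2 + p) / 2) * β₀ * ((4 : ℝ) ^ (p / 2) * L ^ p + q₀ * ξhat * ξbar)))
    -- the stepsize
    (δ : ℝ) (hδ0 : 0 < δ) (hδ1 : δ < 1)
    (hδ : δ < min (1 / (16 * L ^ 2)) ((ηp / α) ^ (2 / p)))
    -- the driving randomness : i.i.d. standard Gaussian vectors `Z` and an
    -- independent Markov chain `J` with one-step transition matrix `exp(δ Q)`
    -- started at `i`
    (Ω : Type*) [MeasurableSpace Ω] (P : Measure Ω) [IsProbabilityMeasure P]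
    (i : Fin N)
    (Z : ℕ → Ω → (Fin m → ℝ)) (J : ℕ → Ω → Fin N)
    (hZmeas : ∀ k, Measurable (Z k)) (hJmeas : ∀ k, Measurable (J k))
    (hZindep : iIndepFun Z P)
    (hZlaw : ∀ k, Measure.map (Z k) P = stdGaussianPi m)
    (hJchain : ∀ (k : ℕ) (j : ℕ → Fin N),
      P {ω | ∀ l ≤ k, J l ω = j l} =
        ENNReal.ofReal ((if j 0 = i then (1 : ℝ) else 0) *
          ∏ l ∈ Finset.range k, matExp (δ • Q) (j l) (j (l + 1))))
    (hZJindep : IndepFun (fun ω l => Z l ω) (fun ω l => J l ω) P)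
    -- the synchronously coupled Euler–Maruyama sequences
    (Ybar : EuclideanSpace ℝ (Fin n) → ℕ → Ω → EuclideanSpace ℝ (Fin n))
    (hY0 : ∀ x ω, Ybar x 0 ω = x)
    (hYrec : ∀ x k ω, Ybar x (k + 1) ω =
      Ybar x k ω + δ • b (Ybar x k ω) (J k ω) +
        Real.sqrt δ •
          ((WithLp.equiv 2 (Fin n → ℝ)).symm
            ((σ (Ybar x k ω) (J k ω)).mulVec (Z k ω)))) :
    ∀ (x y : EuclideanSpace ℝ (Fin n)) (k : ℕ),
      ∫ ω, ‖Ybar x k ω - Ybar y k ω‖ ^ p ∂P ≤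
        ξhat * ξbar * ‖x - y‖ ^ p *
          Real.exp (-((ηp - α * δ ^ (p / 2)) * k * δ)) := by
  intro x y k
  have hηpos' := hηpos
  have hξb : 0 < ξbar⁻¹ := by
    obtain ⟨i0, hi0⟩ := hξbar.1
    rw [← hi0]; exact hξpos i0
  have hξb0 : 0 < ξbar := inv_pos.1 hξb
  have hhat : ∀ j, ξ j ≤ ξhat := fun j => hξhat.2 ⟨j, rfl⟩
  have hmin : ∀ j, ξbar⁻¹ ≤ ξ j := fun j => hξbar.2 ⟨j, rfl⟩
  have hβ : ∀ j, |β j| ≤ β₀ := fun j => hβ₀.2 ⟨j, rfl⟩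
  have hq : ∀ j, -Q j j ≤ q₀ := fun j => hq₀.2 ⟨j, rfl⟩
  have hhat0 : 0 < ξhat := (hξpos i).trans_le (hhat i)
  have hβ₀0 : 0 ≤ β₀ := (abs_nonneg _).trans (hβ i)
  have hq0 : 0 ≤ q₀ := by
    refine le_trans ?_ (hq i)
    have h1 := hQ.2 i
    rw [← Finset.add_sum_erase _ _ (Finset.mem_univ i)] at h1
    have h2 : 0 ≤ ∑ j ∈ Finset.univ.erase i, Q i j :=
      Finset.sum_nonneg fun j hj => hQ.1 i j (Finset.ne_of_mem_erase hj).symm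
    linarith
  have hMnn : ∀ a c, 0 ≤ matExp (δ • Q) a c := matExp_Q_nonneg Q hQ q₀ hq δ hδ0.le
  -- one-step contraction
  set r := Real.exp (-((ηp - α * δ ^ (p / 2)) * δ)) with hr
  set g : Fin N → ℝ := fun j => Real.exp ((p / 2) * (δ * β j + δ ^ 2 * L ^ 2)) with hg
  have hstep : ∀ j, g j * (matExp (δ • Q)).mulVec ξ j ≤ r * ξ j := by
    intro j
    have h1 := one_step Q hQ q₀ hq (fun j => p / 2 * β j) (p / 2 * β₀)
      (fun j => by
        rw [abs_mul, abs_of_pos (by positivity : 0 < p / 2)]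
        exact mul_le_mul_of_nonneg_left (hβ j) (by positivity))
      ηp ξ hξpos
      (fun j => by
        have h := congrFun hξeig j
        rw [Matrix.add_mulVec, Matrix.smul_mulVec] at h
        simp only [Pi.add_apply, Pi.smul_apply, Matrix.mulVec_diagonal, smul_eq_mul] at h
        linarith)
      ξhat ξbar⁻¹ hξb hhat hmin hq0 δ hδ0.le j
    calc g j * (matExp (δ • Q)).mulVec ξ j ≤ g j * _ :=
          mul_le_mul_of_nonneg_left h1 (Real.exp_pos _).le
      _ = ξ j * Real.exp ((p / 2) * (δ * β j + δ ^ 2 * L ^ 2) +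
            (-(ηp + p / 2 * β j) * δ +
              2 * (p / 2 * β₀) * q₀ * ξhat / ξbar⁻¹ * δ ^ 2 / 2)) := by
          rw [Real.exp_add ((p / 2) * (δ * β j + δ ^ 2 * L ^ 2))]; ring
      _ ≤ ξ j * r := by
          refine mul_le_mul_of_nonneg_left (Real.exp_le_exp.2 ?_) (hξpos j).le
          rw [div_inv_eq_mul]
          have hδp : δ ≤ δ ^ (p / 2) := by
            have := Real.rpow_le_rpow_of_exponent_ge hδ0 hδ1.le (by linarith : p / 2 ≤ 1)
            rwa [Real.rpow_one] at this
          set T := q₀ * ξhat * ξbar with hT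
          have hT0 : 0 ≤ T := by positivity
          have h4 : (1 : ℝ) ≤ (4 : ℝ) ^ ((2 + p) / 2) :=
            Real.one_le_rpow (by norm_num) (by positivity)
          have h5 : 0 ≤ (4 : ℝ) ^ (p / 2) * L ^ p := by positivity
          have h6 : β₀ * T ≤ (4 : ℝ) ^ ((2 + p) / 2) * β₀ *
              ((4 : ℝ) ^ (p / 2) * L ^ p + T) := by
            calc β₀ * T ≤ β₀ * ((4 : ℝ) ^ (p / 2) * L ^ p + T) :=
                  mul_le_mul_of_nonneg_left (by linarith) hβ₀0
              _ = 1 * (β₀ * ((4 : ℝ) ^ (p / 2) * L ^ p + T)) := by ring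
              _ ≤ (4 : ℝ) ^ ((2 + p) / 2) * (β₀ * ((4 : ℝ) ^ (p / 2) * L ^ p + T)) :=
                  mul_le_mul_of_nonneg_right h4 (by positivity)
              _ = _ := by ring
          have h7 : L ^ 2 ≤ 4 * L ^ 2 * (3 + 4 * β₀) := by nlinarith [sq_nonneg L, mul_nonneg (sq_nonneg L) hβ₀0]
          have hβT : 0 ≤ β₀ * T := by positivity
          have h8 : p * (L ^ 2 / 2 + β₀ * T / 2) ≤ α := by
            rw [hα]
            refine mul_le_mul_of_nonneg_left ?_ hp.le
            have := sq_nonneg L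
            linarith
          have h8' : 0 ≤ p * (L ^ 2 / 2 + β₀ * T / 2) := by positivity
          have h9 : p * (L ^ 2 / 2 + β₀ * T / 2) * δ ≤ α * δ ^ (p / 2) :=
            mul_le_mul h8 hδp hδ0.le (h8'.trans h8)
          have h10 := mul_le_mul_of_nonneg_right h9 hδ0.le
          have e : (p / 2) * (δ * β j + δ ^ 2 * L ^ 2) +
            (-(ηp + p / 2 * β j) * δ +
              2 * (p / 2 * β₀) * q₀ * ξhat * ξbar * δ ^ 2 / 2) =
              -(ηp * δ) + p * (L ^ 2 / 2 + β₀ * T / 2) * δ * δ := by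
            rw [hT]; ring
          rw [e]
          linarith
      _ = r * ξ j := mul_comm _ _
  -- pathwise bound
  have hpath : ∀ (k : ℕ) (ω : Ω), ‖Ybar x k ω - Ybar y k ω‖ ^ p ≤
      ‖x - y‖ ^ p * ∏ l : Fin k, g (J l ω) := by
    intro k ω
    induction k with
    | zero => simp [hY0]
    | succ k ih =>
      rw [Fin.prod_univ_castSucc]
      simp only [Fin.val_castSucc, Fin.val_last]
      rw [← mul_assoc]
      refine le_trans ?_ (mul_le_mul_of_nonneg_right ih (Real.exp_pos _).le)
      set u := Ybar x k ω
      set v := Ybar y k ω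
      set j := J k ω
      have hdiff : Ybar x (k + 1) ω - Ybar y (k + 1) ω = (u - v) + δ • (b u j - b v j) := by
        rw [hYrec, hYrec, hadd (Ybar x k ω) (Ybar y k ω) (J k ω), smul_sub]
        abel
      rw [hdiff]
      have hs0 : ∀ M : Matrix (Fin n) (Fin m) ℝ, 0 ≤ hsNorm M := fun M => Real.sqrt_nonneg _
      have hb : ‖b u j - b v j‖ ≤ L * ‖u - v‖ := by
        have := hLip j u v
        linarith [hs0 (σ u j - σ v j)]
      have hi : 2 * (inner ℝ (u - v) (b u j - b v j) : ℝ) ≤ β j * ‖u - v‖ ^ 2 := by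
        have := hH2 j u v
        linarith [sq_nonneg (hsNorm (σ u j - σ v j))]
      have hb2 : ‖b u j - b v j‖ ^ 2 ≤ L ^ 2 * ‖u - v‖ ^ 2 := by
        rw [← mul_pow]; exact pow_le_pow_left₀ (norm_nonneg _) hb 2
      have hsq : ‖(u - v) + δ • (b u j - b v j)‖ ^ 2 ≤
          Real.exp (δ * β j + δ ^ 2 * L ^ 2) * ‖u - v‖ ^ 2 := by
        rw [norm_add_sq_real, inner_smul_right, norm_smul, Real.norm_of_nonneg hδ0.le, mul_pow]
        have h1 := Real.add_one_le_exp (δ * β j + δ ^ 2 * L ^ 2)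
        have h2 := mul_le_mul_of_nonneg_right h1 (sq_nonneg ‖u - v‖)
        have h3 := mul_le_mul_of_nonneg_left hi hδ0.le
        have h4 := mul_le_mul_of_nonneg_left hb2 (sq_nonneg δ)
        nlinarith
      have hpw : ∀ z : ℝ, 0 ≤ z → z ^ p = (z ^ 2) ^ (p / 2) := by
        intro z hz
        rw [← Real.rpow_natCast, ← Real.rpow_mul hz]
        congr 1; push_cast; ring
      rw [hpw _ (norm_nonneg _), hpw _ (norm_nonneg (u - v))]
      refine (Real.rpow_le_rpow (sq_nonneg _) hsq (by positivity)).trans (le_of_eq ?_)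
      rw [Real.mul_rpow (Real.exp_pos _).le (sq_nonneg _), ← Real.exp_mul, mul_comm]
      congr 2
      ring
  -- expectation
  obtain ⟨hint, hval⟩ := chain_expect (matExp (δ • Q)) hMnn P i J hJmeas hJchain k
    (fun c => (∏ l : Fin k, g (c l.castSucc)) * ξ (c (Fin.last k)))
  have hsum := path_sum_le (matExp (δ • Q)) hMnn g ξ (fun j => (Real.exp_pos _).le) r
    (Real.exp_pos _).le hstep i k
  rw [← hval] at hsum
  have hnn : 0 ≤ ‖x - y‖ ^ p := Real.rpow_nonneg (norm_nonneg _) _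
  calc ∫ ω, ‖Ybar x k ω - Ybar y k ω‖ ^ p ∂P
      ≤ ∫ ω, (‖x - y‖ ^ p * ξbar) * ((∏ l : Fin k, g (J l.castSucc ω)) *
          ξ (J (Fin.last k) ω)) ∂P := by
        refine integral_mono_of_nonneg (Filter.Eventually.of_forall fun ω => ?_)
          (hint.const_mul _) (Filter.Eventually.of_forall fun ω => ?_)
        · exact Real.rpow_nonneg (norm_nonneg _) _
        · refine (hpath k ω).trans ?_
          have h1 : 1 ≤ ξbar * ξ (J (Fin.last k) ω) := by
            have := mul_le_mul_of_nonneg_left (hmin (J (Fin.last k) ω)) hξb0.le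
            rwa [mul_inv_cancel₀ hξb0.ne'] at this
          have h2 : 0 ≤ ‖x - y‖ ^ p * ∏ l : Fin k, g (J l ω) :=
            mul_nonneg hnn (Finset.prod_nonneg fun l _ => (Real.exp_pos _).le)
          have h3 := mul_le_mul_of_nonneg_left h1 h2
          simp only [Fin.val_castSucc]
          linarith
    _ = (‖x - y‖ ^ p * ξbar) * ∫ ω, ((∏ l : Fin k, g (J l.castSucc ω)) *
          ξ (J (Fin.last k) ω)) ∂P := integral_const_mul _ _
    _ ≤ (‖x - y‖ ^ p * ξbar) * (r ^ k * ξ i) :=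
        mul_le_mul_of_nonneg_left hsum (by positivity)
    _ ≤ (‖x - y‖ ^ p * ξbar) * (r ^ k * ξhat) := by
        have : 0 < r := Real.exp_pos _
        have := hhat i
        gcongr
    _ = ξhat * ξbar * ‖x - y‖ ^ p *
          Real.exp (-((ηp - α * δ ^ (p / 2)) * k * δ)) := by
        rw [hr, ← Real.exp_nat_mul]
        have : (k : ℝ) * -((ηp - α * δ ^ (p / 2)) * δ) =
          -((ηp - α * δ ^ (p / 2)) * k * δ) := by ring
        rw [this]; ring
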